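/- arXiv:2006.07531 — 3 statements merged into one kernel-verified Lean document; each statement's English description precedes it below -/
import Mathlib

section
/- Let p ≥ 3 be a prime. In G = DihedralGroup p × DihedralGroup p with s₁ = (sr 0, 1), s₂ = (1, sr 0), r₁ = (r 1, 1), r₂ = (1, r 1), the subgroup generated by the set {s₁, s₂, r₁r₂} is all of G. -/
/-- For odd `n`, a reflection and the square of the basic rotation generate `DihedralGroup n`. -/
theorem DihedralGroup.eq_top_of_sr_zero_mem_of_r_two_mem {n : ℕ} (hn : Odd n)
    {H : Subgroup (DihedralGroup n)} (hs : sr 0 ∈ H) (hr : r 2 ∈ H) : H = ⊤ := by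
  have hrot (i : ZMod n) : r i ∈ H := by
    have h2 : (2 : ZMod n) * 2⁻¹ = 1 := by
      exact_mod_cast ZMod.coe_mul_inv_eq_one 2 hn.coprime_two_left
    obtain ⟨k, hk⟩ := ZMod.intCast_surjective (2⁻¹ * i)
    have := H.zpow_mem hr k
    rwa [r_zpow, hk, ← mul_assoc, h2, one_mul] at this
  refine (Subgroup.eq_top_iff' H).2 ?_
  rintro (i | i)
  · exact hrot i
  · simpa using H.mul_mem hs (hrot i)

/-- A subgroup of a product of groups containing both factors is the whole product. -/
theorem Subgroup.eq_top_of_comap_inl_of_comap_inr {G K : Type*} [Group G] [Group K]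
    {H : Subgroup (G × K)} (hl : H.comap (MonoidHom.inl G K) = ⊤)
    (hr : H.comap (MonoidHom.inr G K) = ⊤) : H = ⊤ := by
  refine (Subgroup.eq_top_iff' H).2 fun ⟨a, b⟩ => ?_
  have ha : (a, 1) ∈ H := (Subgroup.eq_top_iff' _).1 hl a
  have hb : (1, b) ∈ H := (Subgroup.eq_top_iff' _).1 hr b
  simpa using H.mul_mem ha hb

theorem stmt_5 (p : ℕ) (hp : p.Prime) (hp3 : 3 ≤ p)
    (s₁ s₂ r₁ r₂ : DihedralGroup p × DihedralGroup p)
    (hs₁ : s₁ = (DihedralGroup.sr 0, 1)) (hs₂ : s₂ = (1, DihedralGroup.sr 0))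
    (hr₁ : r₁ = (DihedralGroup.r 1, 1)) (hr₂ : r₂ = (1, DihedralGroup.r 1)) :
    Subgroup.closure {s₁, s₂, r₁ * r₂} = ⊤ := by
  have hodd : Odd p := hp.odd_of_ne_two (by lia)
  set H := Subgroup.closure {s₁, s₂, r₁ * r₂}
  have h₁ : s₁ ∈ H := Subgroup.subset_closure (by simp)
  have h₂ : s₂ ∈ H := Subgroup.subset_closure (by simp)
  have h : r₁ * r₂ ∈ H := Subgroup.subset_closure (by simp)
  have conj_mem {s} (hs : s ∈ H) : r₁ * r₂ * (s * (r₁ * r₂) * s⁻¹)⁻¹ ∈ H :=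
    H.mul_mem h (H.inv_mem (H.mul_mem (H.mul_mem hs h) (H.inv_mem hs)))
  have hrot₁ := conj_mem h₁
  have hrot₂ := conj_mem h₂
  subst hs₁ hs₂ hr₁ hr₂
  apply Subgroup.eq_top_of_comap_inl_of_comap_inr
  · exact DihedralGroup.eq_top_of_sr_zero_mem_of_r_two_mem hodd h₁
      (by simpa [one_add_one_eq_two] using hrot₁)
  · exact DihedralGroup.eq_top_of_sr_zero_mem_of_r_two_mem hodd h₂
      (by simpa [one_add_one_eq_two] using hrot₂)
end

section
/- Let p ≥ 3 be a prime and let d ≥ 2 be an even integer. In G = DihedralGroup p × DihedralGroup p with s₁ = (sr 0, 1), s₂ = (1, sr 0), r₁ = (r 1, 1), r₂ = (1, r 1), the product s₁ · s₂ · (s₁s₂(r₁r₂)^{−d/2}) · ∏_{i=4}^{d+3} x_i equals 1, where x_i = r₁ when i is even and x_i = r₂ when i is odd. -/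
theorem List.prod_map_range_alternating {M : Type*} [Monoid M] (a b : M) (k : ℕ) :
    ((List.range (k + k)).map (fun j => if Even (j + 4) then a else b)).prod = (a * b) ^ k := by
  induction k with
  | zero => simp
  | succ k ih =>
    have h₀ : Even (k + k + 4) := ⟨k + 2, by ring⟩
    have h₁ : ¬ Even (k + k + 1 + 4) := Nat.not_even_iff_odd.mpr ⟨k + 2, by ring⟩
    rw [show k + 1 + (k + 1) = k + k + 1 + 1 by ring, List.range_succ, List.range_succ]
    simp only [List.map_append, List.prod_append, ih, List.map_singleton, List.prod_singleton,
      if_pos h₀, if_neg h₁]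
    rw [pow_succ, mul_assoc]

theorem stmt_7 (p : ℕ) (hp : p.Prime) (hp3 : 3 ≤ p)
    (d : ℕ) (hd2 : 2 ≤ d) (hdeven : Even d)
    (s₁ s₂ r₁ r₂ : DihedralGroup p × DihedralGroup p)
    (hs₁ : s₁ = (DihedralGroup.sr 0, 1)) (hs₂ : s₂ = (1, DihedralGroup.sr 0))
    (hr₁ : r₁ = (DihedralGroup.r 1, 1)) (hr₂ : r₂ = (1, DihedralGroup.r 1)) :
    s₁ * s₂ * (s₁ * s₂ * (r₁ * r₂) ^ (-((d : ℤ) / 2))) *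
      ((List.range d).map (fun j => if Even (j + 4) then r₁ else r₂)).prod = 1 := by
  obtain ⟨k, rfl⟩ := hdeven
  have hs : s₁ * s₂ * (s₁ * s₂) = 1 := by
    subst hs₁ hs₂
    simp [Prod.ext_iff]
  have hk : ((k + k : ℕ) : ℤ) / 2 = k := by omega
  rw [List.prod_map_range_alternating, hk, zpow_neg, zpow_natCast, ← mul_assoc, hs, one_mul,
    inv_mul_cancel]
end

section
/- Let p ≥ 3 be a prime. In G = DihedralGroup p × DihedralGroup p with s₁ = (sr 0, 1), s₂ = (1, sr 0), r₁ = (r 1, 1), r₂ = (1, r 1), the element r₁² lies in the subgroup generated by {s₁, r₁r₂}, and since p is odd, ⟨r₁²⟩ = ⟨r₁⟩; consequently r₁ and r₂ both lie in the subgroup generated by {s₁, r₁r₂}. -/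
theorem stmt_16 (p : ℕ) (hp : p.Prime) (hp3 : 3 ≤ p)
    (s₁ s₂ r₁ r₂ : DihedralGroup p × DihedralGroup p)
    (hs₁ : s₁ = (DihedralGroup.sr 0, 1)) (hs₂ : s₂ = (1, DihedralGroup.sr 0))
    (hr₁ : r₁ = (DihedralGroup.r 1, 1)) (hr₂ : r₂ = (1, DihedralGroup.r 1)) :
    r₁ ^ 2 ∈ Subgroup.closure {s₁, r₁ * r₂} ∧
    Subgroup.zpowers (r₁ ^ 2) = Subgroup.zpowers r₁ ∧
    r₁ ∈ Subgroup.closure {s₁, r₁ * r₂} ∧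
    r₂ ∈ Subgroup.closure {s₁, r₁ * r₂} := by
  have hs : s₁ ∈ Subgroup.closure {s₁, r₁ * r₂} := Subgroup.subset_closure (by simp)
  have hr : r₁ * r₂ ∈ Subgroup.closure {s₁, r₁ * r₂} := Subgroup.subset_closure (by simp)
  have hconj : s₁ * (r₁ * r₂) * s₁⁻¹ = r₁⁻¹ * r₂ := by
    subst hs₁ hr₁ hr₂
    simp
  have hsq : r₁ ^ 2 = r₁ * r₂ * (s₁ * (r₁ * r₂) * s₁⁻¹)⁻¹ := by
    rw [hconj, mul_inv_rev, inv_inv, pow_two]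
    group
  have hsq_mem : r₁ ^ 2 ∈ Subgroup.closure {s₁, r₁ * r₂} := by
    rw [hsq]
    exact mul_mem hr (inv_mem (mul_mem (mul_mem hs hr) (inv_mem hs)))
  have hpow : r₁ ^ p = 1 := by
    subst hr₁
    simp [Prod.ext_iff]
  obtain ⟨k, hk⟩ := hp.odd_of_ne_two (by omega)
  have hroot : (r₁ ^ 2) ^ (k + 1) = r₁ := by
    rw [← pow_mul, show 2 * (k + 1) = p + 1 by omega, pow_succ, hpow, one_mul]
  have hr₁_mem : r₁ ∈ Subgroup.closure {s₁, r₁ * r₂} := by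
    have := pow_mem hsq_mem (k + 1)
    rwa [hroot] at this
  refine ⟨hsq_mem, le_antisymm ?_ ?_, hr₁_mem, (Subgroup.mul_mem_cancel_left _ hr₁_mem).1 hr⟩
  · exact Subgroup.zpowers_le.2 (pow_mem (Subgroup.mem_zpowers r₁) 2)
  · refine Subgroup.zpowers_le.2 ?_
    have := pow_mem (Subgroup.mem_zpowers (r₁ ^ 2)) (k + 1)
    rwa [hroot] at this
end
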